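/- For all s ∈ ℝ, ⟨T(s), C′(s)⟩ = g(s)·τ(s)/f(s) and ‖C′(s)‖² = f(s)² + g(s)²; consequently the striction line of the C-ruled surface is α*(s) = α(s) − (g(s)·τ(s)/(f(s)·(f(s)² + g(s)²)))·C(s). -/

import Mathlib

open RealInnerProductSpace

/-- Cross product on `EuclideanSpace ℝ (Fin 3)`. -/
noncomputable def cross3 (u v : EuclideanSpace ℝ (Fin 3)) : EuclideanSpace ℝ (Fin 3) :=
  (EuclideanSpace.equiv (Fin 3) ℝ).symm
    (crossProduct ((EuclideanSpace.equiv (Fin 3) ℝ) u) ((EuclideanSpace.equiv (Fin 3) ℝ) v))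

/-- Determinant of the 3×3 matrix whose rows are the given vectors. -/
noncomputable def det3 (u v w : EuclideanSpace ℝ (Fin 3)) : ℝ :=
  Matrix.det (Matrix.of ![(EuclideanSpace.equiv (Fin 3) ℝ) u,
    (EuclideanSpace.equiv (Fin 3) ℝ) v, (EuclideanSpace.equiv (Fin 3) ℝ) w])

/-!
Write `κ / √(κ² + τ²) = cos θ` and `τ / √(κ² + τ²) = sin θ` with `θ = arctan (τ / κ)`, which is
legitimate because `κ > 0`. Then `C = -cos θ T + sin θ B` and `W = sin θ T + cos θ B` are obtained
from `T` and `B` by a rotation about `N`, and `θ' = (τ / κ)' / (1 + (τ / κ)²)` is exactly `g`. With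
`T' = κ N` and `B' = -τ N` the product rule gives `C' = g W - f N`, and both claims are read off
from `W` and `N` being orthonormal and from `⟪T, W⟫ = sin θ = τ / f`.
-/

section OrthonormalTriples

variable {E : Type*} [NormedAddCommGroup E] [InnerProductSpace ℝ E]

theorem orthonormal_pair_iff {u v : E} :
    Orthonormal ℝ ![u, v] ↔ ‖u‖ = 1 ∧ ‖v‖ = 1 ∧ ⟪u, v⟫ = 0 := by
  simp only [orthonormal_vecCons_iff, Matrix.cons_val_fin_one, Fin.forall_fin_one,
    IsEmpty.forall_iff, Orthonormal.of_isEmpty]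
  tauto

theorem orthonormal_triple_iff {u v w : E} :
    Orthonormal ℝ ![u, v, w] ↔
      ‖u‖ = 1 ∧ ‖v‖ = 1 ∧ ‖w‖ = 1 ∧ ⟪u, v⟫ = 0 ∧ ⟪u, w⟫ = 0 ∧ ⟪v, w⟫ = 0 := by
  simp only [orthonormal_vecCons_iff, Fin.forall_fin_two, Matrix.cons_val_zero,
    Matrix.cons_val_one, Matrix.cons_val_fin_one, Fin.forall_fin_one, IsEmpty.forall_iff,
    Orthonormal.of_isEmpty]
  tauto

theorem eq_sum_inner_smul_of_orthonormal_triple (hE : Module.finrank ℝ E = 3) {u v w : E}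
    (h : Orthonormal ℝ ![u, v, w]) (x : E) :
    x = ⟪u, x⟫ • u + ⟪v, x⟫ • v + ⟪w, x⟫ • w := by
  have hspan : ⊤ ≤ Submodule.span ℝ (Set.range ![u, v, w]) :=
    (h.linearIndependent.span_eq_top_of_card_eq_finrank (by simp [hE])).ge
  simpa [Fin.sum_univ_three] using ((OrthonormalBasis.mk h hspan).sum_repr' x).symm

theorem inner_deriv_add_inner_deriv_eq_zero {u v : ℝ → E} {u' v' : E} {s c : ℝ}
    (hu : HasDerivAt u u' s) (hv : HasDerivAt v v' s) (h : ∀ x, ⟪u x, v x⟫ = c) :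
    ⟪u s, v'⟫ + ⟪u', v s⟫ = 0 :=
  (hu.inner ℝ hv).unique (by simpa only [h] using hasDerivAt_const s c)

theorem inner_deriv_eq_zero_of_norm_eq {u : ℝ → E} {u' : E} {s c : ℝ} (hu : HasDerivAt u u' s)
    (h : ∀ x, ‖u x‖ = c) : ⟪u s, u'⟫ = 0 := by
  have hsum := inner_deriv_add_inner_deriv_eq_zero (c := c ^ 2) hu hu fun x => by
    rw [real_inner_self_eq_norm_sq, h]
  rw [real_inner_comm (u s) u'] at hsum
  linarith

/-- The third Frenet–Serret equation `b' = -τ n`, with the torsion written out as `⟪n', b⟫`. -/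
theorem hasDerivAt_third_of_orthonormal (hE : Module.finrank ℝ E = 3) {t n b : ℝ → E} {k s : ℝ}
    (horth : ∀ x, Orthonormal ℝ ![t x, n x, b x]) (ht : HasDerivAt t (k • n s) s)
    (hn : DifferentiableAt ℝ n s) (hb : DifferentiableAt ℝ b s) :
    HasDerivAt b (-⟪deriv n s, b s⟫ • n s) s := by
  choose _ _ hb₁ _ htb hnb using fun x => orthonormal_triple_iff.1 (horth x)
  have hbt : ⟪t s, deriv b s⟫ = 0 := by
    simpa only [real_inner_smul_left, hnb, mul_zero, add_zero] using
      inner_deriv_add_inner_deriv_eq_zero ht hb.hasDerivAt htb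
  have hbn : ⟪n s, deriv b s⟫ = -⟪deriv n s, b s⟫ :=
    eq_neg_of_add_eq_zero_left
      (inner_deriv_add_inner_deriv_eq_zero hn.hasDerivAt hb.hasDerivAt hnb)
  have hbb : ⟪b s, deriv b s⟫ = 0 := inner_deriv_eq_zero_of_norm_eq hb.hasDerivAt hb₁
  have hexpand := eq_sum_inner_smul_of_orthonormal_triple hE (horth s) (deriv b s)
  rw [hbt, hbn, hbb, zero_smul, zero_smul, zero_add, add_zero] at hexpand
  exact hexpand ▸ hb.hasDerivAt

end OrthonormalTriples

section CrossProduct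

theorem cross3_eq_toLp (u v : EuclideanSpace ℝ (Fin 3)) :
    cross3 u v = WithLp.toLp 2 (crossProduct u.ofLp v.ofLp) :=
  rfl

theorem inner_left_cross3 (u v : EuclideanSpace ℝ (Fin 3)) : ⟪u, cross3 u v⟫ = 0 := by
  simp [cross3_eq_toLp, EuclideanSpace.inner_eq_star_dotProduct, dotProduct_comm]

theorem inner_right_cross3 (u v : EuclideanSpace ℝ (Fin 3)) : ⟪v, cross3 u v⟫ = 0 := by
  simp [cross3_eq_toLp, EuclideanSpace.inner_eq_star_dotProduct, dotProduct_comm]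

theorem orthonormal_cross3 {u v : EuclideanSpace ℝ (Fin 3)} (h : Orthonormal ℝ ![u, v]) :
    Orthonormal ℝ ![u, v, cross3 u v] := by
  obtain ⟨hu, hv, huv⟩ := orthonormal_pair_iff.1 h
  have hnorm : ‖cross3 u v‖ = 1 := by
    have hangle := InnerProductGeometry.inner_eq_zero_iff_angle_eq_pi_div_two u v |>.1 huv
    simpa [cross3_eq_toLp, hu, hv, hangle] using InnerProductGeometry.norm_ofLp_crossProduct u v
  exact orthonormal_triple_iff.2
    ⟨hu, hv, hnorm, huv, inner_left_cross3 u v, inner_right_cross3 u v⟩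

theorem contDiff_cross3 {F : Type*} [NormedAddCommGroup F] [NormedSpace ℝ F] {n : WithTop ℕ∞}
    {u v : F → EuclideanSpace ℝ (Fin 3)} (hu : ContDiff ℝ n u) (hv : ContDiff ℝ n v) :
    ContDiff ℝ n fun x => cross3 (u x) (v x) := by
  rw [contDiff_euclidean] at hu hv ⊢
  intro i
  fin_cases i <;>
    simp only [cross3_eq_toLp, cross_apply, Fin.zero_eta, Fin.mk_one, Fin.reduceFinMk,
      Matrix.cons_val] <;>
    fun_prop

end CrossProduct

section AlternativeFrame

open Real

variable {E : Type*} [NormedAddCommGroup E] [InnerProductSpace ℝ E]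
  {κ τ : ℝ → ℝ} {T N B : ℝ → E} {s : ℝ}

/-- The curvature `f = √(κ² + τ²)` of the alternative frame `N, C, W`: the length of the Darboux
vector. -/
noncomputable def alternativeCurvature (κ τ : ℝ → ℝ) (s : ℝ) : ℝ :=
  √(κ s ^ 2 + τ s ^ 2)

/-- The second curvature `g` of the alternative frame `N, C, W`: the rate at which `C` turns
towards `W`, as `C' = g W - f N`. -/
noncomputable def alternativeTorsion (κ τ : ℝ → ℝ) (s : ℝ) : ℝ :=
  κ s ^ 2 / (κ s ^ 2 + τ s ^ 2) * deriv (fun u => τ u / κ u) s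

/-- The vector field `C` of the alternative frame: the unit vector along the derivative of the
principal normal. It directs the rulings of the `C`-ruled surface. -/
noncomputable def conjugateNormal (κ τ : ℝ → ℝ) (T B : ℝ → E) (s : ℝ) : E :=
  (√(κ s ^ 2 + τ s ^ 2))⁻¹ • ((-κ s) • T s + τ s • B s)

/-- The vector field `W` of the alternative frame: the unit vector along the Darboux vector of the
Frenet frame. -/
noncomputable def unitDarboux (κ τ : ℝ → ℝ) (T B : ℝ → E) (s : ℝ) : E :=
  (√(κ s ^ 2 + τ s ^ 2))⁻¹ • (τ s • T s + κ s • B s)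

/-- The angle from the binormal to the unit Darboux vector `W`, towards the tangent. Taking `arctan`
makes it that angle only where `κ > 0`. -/
noncomputable def darbouxAngle (κ τ : ℝ → ℝ) (s : ℝ) : ℝ :=
  arctan (τ s / κ s)

theorem alternativeCurvature_pos (hκ : 0 < κ s) : 0 < alternativeCurvature κ τ s :=
  sqrt_pos.2 (by positivity)

theorem sqrt_one_add_div_sq (hκ : 0 < κ s) :
    √(1 + (τ s / κ s) ^ 2) = alternativeCurvature κ τ s / κ s := by
  have hsq : 1 + (τ s / κ s) ^ 2 = (κ s ^ 2 + τ s ^ 2) / κ s ^ 2 := by field_simp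
  rw [alternativeCurvature, hsq, sqrt_div' _ (sq_nonneg _), sqrt_sq hκ.le]

theorem cos_darbouxAngle (hκ : 0 < κ s) :
    cos (darbouxAngle κ τ s) = κ s / alternativeCurvature κ τ s := by
  rw [darbouxAngle, cos_arctan, sqrt_one_add_div_sq hκ, one_div_div]

theorem sin_darbouxAngle (hκ : 0 < κ s) :
    sin (darbouxAngle κ τ s) = τ s / alternativeCurvature κ τ s := by
  rw [darbouxAngle, sin_arctan, sqrt_one_add_div_sq hκ, div_div_div_cancel_right₀ hκ.ne']

theorem alternativeCurvature_eq_cos_add_sin (hκ : 0 < κ s) :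
    alternativeCurvature κ τ s =
      κ s * cos (darbouxAngle κ τ s) + τ s * sin (darbouxAngle κ τ s) := by
  have hpos : 0 < alternativeCurvature κ τ s := alternativeCurvature_pos hκ
  rw [cos_darbouxAngle hκ, sin_darbouxAngle hκ]
  field_simp
  exact sq_sqrt (by positivity)

theorem hasDerivAt_darbouxAngle (hκ : κ s ≠ 0)
    (hslope : DifferentiableAt ℝ (fun u => τ u / κ u) s) :
    HasDerivAt (darbouxAngle κ τ) (alternativeTorsion κ τ s) s := by
  refine hslope.hasDerivAt.arctan.congr_deriv ?_
  rw [alternativeTorsion]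
  field_simp

theorem conjugateNormal_eq_rotation (hκ : 0 < κ s) :
    conjugateNormal κ τ T B s =
      sin (darbouxAngle κ τ s) • B s - cos (darbouxAngle κ τ s) • T s := by
  rw [sin_darbouxAngle hκ, cos_darbouxAngle hκ, conjugateNormal, alternativeCurvature]
  module

theorem unitDarboux_eq_rotation (hκ : 0 < κ s) :
    unitDarboux κ τ T B s =
      sin (darbouxAngle κ τ s) • T s + cos (darbouxAngle κ τ s) • B s := by
  rw [sin_darbouxAngle hκ, cos_darbouxAngle hκ, unitDarboux, alternativeCurvature]
  module

theorem hasDerivAt_conjugateNormal (hκ : ∀ x, 0 < κ x)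
    (hslope : DifferentiableAt ℝ (fun u => τ u / κ u) s)
    (hT : HasDerivAt T (κ s • N s) s) (hB : HasDerivAt B (-τ s • N s) s) :
    HasDerivAt (conjugateNormal κ τ T B)
      (alternativeTorsion κ τ s • unitDarboux κ τ T B s - alternativeCurvature κ τ s • N s) s := by
  have hθ : HasDerivAt (darbouxAngle κ τ) (alternativeTorsion κ τ s) s :=
    hasDerivAt_darbouxAngle (hκ s).ne' hslope
  have hC : conjugateNormal κ τ T B = fun x =>
      sin (darbouxAngle κ τ x) • B x - cos (darbouxAngle κ τ x) • T x :=
    funext fun x => conjugateNormal_eq_rotation (hκ x)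
  rw [hC, unitDarboux_eq_rotation (hκ s), alternativeCurvature_eq_cos_add_sin (hκ s)]
  refine ((hθ.sin.smul hB).sub (hθ.cos.smul hT)).congr_deriv ?_
  module

theorem inner_tangent_unitDarboux (hT : ‖T s‖ = 1) (hTB : ⟪T s, B s⟫ = 0) :
    ⟪T s, unitDarboux κ τ T B s⟫ = τ s / alternativeCurvature κ τ s := by
  simp only [unitDarboux, alternativeCurvature, real_inner_smul_right, inner_add_right,
    real_inner_self_eq_norm_sq, hT, hTB]
  ring

theorem orthonormal_unitDarboux_normal (hκ : 0 < κ s) (h : Orthonormal ℝ ![T s, N s, B s]) :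
    Orthonormal ℝ ![unitDarboux κ τ T B s, N s] := by
  obtain ⟨hT, hN, hB, hTN, hTB, hNB⟩ := orthonormal_triple_iff.1 h
  rw [unitDarboux_eq_rotation hκ]
  refine orthonormal_pair_iff.2 ⟨?_, hN, ?_⟩
  · rw [← sq_eq_sq₀ (norm_nonneg _) zero_le_one, norm_add_sq_real]
    simp [norm_smul, real_inner_smul_left, real_inner_smul_right, hT, hB, hTB]
  · simp [inner_add_left, real_inner_smul_left, hTN, real_inner_comm (N s) (B s), hNB]

theorem inner_tangent_deriv_conjugateNormal (hκ : ∀ x, 0 < κ x)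
    (hslope : DifferentiableAt ℝ (fun u => τ u / κ u) s)
    (hT : HasDerivAt T (κ s • N s) s) (hB : HasDerivAt B (-τ s • N s) s)
    (h : Orthonormal ℝ ![T s, N s, B s]) :
    ⟪T s, deriv (conjugateNormal κ τ T B) s⟫ =
      alternativeTorsion κ τ s * τ s / alternativeCurvature κ τ s := by
  obtain ⟨hT₁, -, -, hTN, hTB, -⟩ := orthonormal_triple_iff.1 h
  rw [(hasDerivAt_conjugateNormal hκ hslope hT hB).deriv, inner_sub_right, real_inner_smul_right,
    real_inner_smul_right, inner_tangent_unitDarboux hT₁ hTB, hTN, mul_zero, sub_zero,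
    mul_div_assoc]

theorem norm_deriv_conjugateNormal_sq (hκ : ∀ x, 0 < κ x)
    (hslope : DifferentiableAt ℝ (fun u => τ u / κ u) s)
    (hT : HasDerivAt T (κ s • N s) s) (hB : HasDerivAt B (-τ s • N s) s)
    (h : Orthonormal ℝ ![T s, N s, B s]) :
    ‖deriv (conjugateNormal κ τ T B) s‖ ^ 2 =
      alternativeCurvature κ τ s ^ 2 + alternativeTorsion κ τ s ^ 2 := by
  obtain ⟨hW, hN, hWN⟩ := orthonormal_pair_iff.1 (orthonormal_unitDarboux_normal (τ := τ) (hκ s) h)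
  rw [(hasDerivAt_conjugateNormal hκ hslope hT hB).deriv, norm_sub_sq_real, norm_smul, norm_smul,
    real_inner_smul_left, real_inner_smul_right, hW, hN, hWN]
  simp only [mul_one, mul_zero, sub_zero, norm_eq_abs, sq_abs]
  ring

end AlternativeFrame

section TangentAndNormal

variable {E : Type*} [NormedAddCommGroup E] [InnerProductSpace ℝ E] {α : ℝ → E}

/-- The curvature of a unit-speed curve. -/
noncomputable def curvature (α : ℝ → E) (s : ℝ) : ℝ :=
  ‖deriv (deriv α) s‖

/-- The principal normal of a unit-speed curve; it is `0` where the curvature vanishes. -/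
noncomputable def principalNormal (α : ℝ → E) (s : ℝ) : E :=
  (curvature α s)⁻¹ • deriv (deriv α) s

theorem contDiff_curvature {n : ℕ} (hα : ContDiff ℝ (n + 2 : ℕ) α) (hκ : ∀ s, 0 < curvature α s) :
    ContDiff ℝ n (curvature α) :=
  (hα.iterate_deriv' n 2).norm ℝ fun s => norm_pos_iff.1 (hκ s)

theorem contDiff_principalNormal {n : ℕ} (hα : ContDiff ℝ (n + 2 : ℕ) α)
    (hκ : ∀ s, 0 < curvature α s) : ContDiff ℝ n (principalNormal α) :=
  ((contDiff_curvature hα hκ).inv fun s => (hκ s).ne').smul (hα.iterate_deriv' n 2)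

theorem hasDerivAt_tangent {s : ℝ} (hα : DifferentiableAt ℝ (deriv α) s) (hκ : 0 < curvature α s) :
    HasDerivAt (deriv α) (curvature α s • principalNormal α s) s := by
  rw [principalNormal, smul_inv_smul₀ hκ.ne']
  exact hα.hasDerivAt

theorem orthonormal_tangent_principalNormal {s : ℝ} (hα : DifferentiableAt ℝ (deriv α) s)
    (hunit : ∀ x, ‖deriv α x‖ = 1) (hκ : 0 < curvature α s) :
    Orthonormal ℝ ![deriv α s, principalNormal α s] := by
  refine orthonormal_pair_iff.2
    ⟨hunit s, norm_smul_inv_norm (𝕜 := ℝ) (norm_pos_iff.1 hκ), ?_⟩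
  rw [principalNormal, real_inner_smul_right, inner_deriv_eq_zero_of_norm_eq hα.hasDerivAt hunit,
    mul_zero]

end TangentAndNormal

section FrenetFrame

variable {α : ℝ → EuclideanSpace ℝ (Fin 3)}

/-- The binormal of a unit-speed space curve. -/
noncomputable def binormal (α : ℝ → EuclideanSpace ℝ (Fin 3)) (s : ℝ) :
    EuclideanSpace ℝ (Fin 3) :=
  cross3 (deriv α s) (principalNormal α s)

/-- The torsion of a unit-speed space curve, with the sign for which `N' = -κ T + τ B`. -/
noncomputable def torsion (α : ℝ → EuclideanSpace ℝ (Fin 3)) (s : ℝ) : ℝ :=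
  ⟪deriv (principalNormal α) s, binormal α s⟫

theorem contDiff_binormal {n : ℕ} (hα : ContDiff ℝ (n + 2 : ℕ) α)
    (hκ : ∀ s, 0 < curvature α s) : ContDiff ℝ n (binormal α) :=
  contDiff_cross3 ((hα.iterate_deriv' (n + 1) 1).of_le (by exact_mod_cast n.le_succ))
    (contDiff_principalNormal hα hκ)

theorem contDiff_torsion {n : ℕ} (hα : ContDiff ℝ (n + 3 : ℕ) α)
    (hκ : ∀ s, 0 < curvature α s) : ContDiff ℝ n (torsion α) :=
  ((contDiff_principalNormal (n := n + 1) hα hκ).iterate_deriv' n 1).inner ℝ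
    (contDiff_binormal (hα.of_le (by exact_mod_cast (n + 2).le_succ)) hκ)

theorem orthonormal_frenetFrame {s : ℝ} (hα : DifferentiableAt ℝ (deriv α) s)
    (hunit : ∀ x, ‖deriv α x‖ = 1) (hκ : 0 < curvature α s) :
    Orthonormal ℝ ![deriv α s, principalNormal α s, binormal α s] :=
  orthonormal_cross3 (orthonormal_tangent_principalNormal hα hunit hκ)

theorem hasDerivAt_binormal (hα : ContDiff ℝ 3 α) (hunit : ∀ x, ‖deriv α x‖ = 1)
    (hκ : ∀ x, 0 < curvature α x) (s : ℝ) :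
    HasDerivAt (binormal α) (-torsion α s • principalNormal α s) s := by
  have hT : Differentiable ℝ (deriv α) :=
    (hα.iterate_deriv' 2 1).differentiable two_ne_zero
  exact hasDerivAt_third_of_orthonormal finrank_euclideanSpace_fin
    (fun x => orthonormal_frenetFrame (hT x) hunit (hκ x)) (hasDerivAt_tangent (hT s) (hκ s))
    ((contDiff_principalNormal (n := 1) hα hκ).differentiable one_ne_zero s)
    ((contDiff_binormal (n := 1) hα hκ).differentiable one_ne_zero s)

end FrenetFrame

theorem stmt_5_general {α : ℝ → EuclideanSpace ℝ (Fin 3)} (hα : ContDiff ℝ 4 α)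
    (hunit : ∀ s, ‖deriv α s‖ = 1) (hκ : ∀ s, 0 < curvature α s) (s : ℝ) :
    let κ := curvature α
    let τ := torsion α
    let f := alternativeCurvature κ τ
    let g := alternativeTorsion κ τ
    let C := conjugateNormal κ τ (deriv α) (binormal α)
    ⟪deriv α s, deriv C s⟫ = g s * τ s / f s ∧
    ‖deriv C s‖ ^ 2 = f s ^ 2 + g s ^ 2 ∧
    α s - (⟪deriv α s, deriv C s⟫ / ‖deriv C s‖ ^ 2) • C s =
      α s - (g s * τ s / (f s * (f s ^ 2 + g s ^ 2))) • C s := by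
  intro κ τ f g C
  have hslope : DifferentiableAt ℝ (fun u => τ u / κ u) s :=
    ((contDiff_torsion (n := 1) hα hκ).differentiable one_ne_zero s).div
      ((contDiff_curvature (n := 2) hα hκ).differentiable two_ne_zero s) (hκ s).ne'
  have hα' : DifferentiableAt ℝ (deriv α) s :=
    (hα.iterate_deriv' 3 1).differentiable three_ne_zero s
  have horth := orthonormal_frenetFrame hα' hunit (hκ s)
  have hT := hasDerivAt_tangent hα' (hκ s)
  have hB := hasDerivAt_binormal (hα.of_le (by norm_num)) hunit hκ s
  have hinner : ⟪deriv α s, deriv C s⟫ = g s * τ s / f s :=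
    inner_tangent_deriv_conjugateNormal hκ hslope hT hB horth
  have hnorm : ‖deriv C s‖ ^ 2 = f s ^ 2 + g s ^ 2 :=
    norm_deriv_conjugateNormal_sq hκ hslope hT hB horth
  exact ⟨hinner, hnorm, by rw [hinner, hnorm, div_div]⟩

theorem stmt_5
    (α : ℝ → EuclideanSpace ℝ (Fin 3))
    (hα : ContDiff ℝ (⊤ : ℕ∞) α)
    (hunit : ∀ s, ‖deriv α s‖ = 1)
    (T : ℝ → EuclideanSpace ℝ (Fin 3)) (hT : ∀ s, T s = deriv α s)
    (κ : ℝ → ℝ) (hκ : ∀ s, κ s = ‖deriv (deriv α) s‖) (hκpos : ∀ s, 0 < κ s)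
    (N : ℝ → EuclideanSpace ℝ (Fin 3)) (hN : ∀ s, N s = (κ s)⁻¹ • deriv (deriv α) s)
    (B : ℝ → EuclideanSpace ℝ (Fin 3)) (hB : ∀ s, B s = cross3 (T s) (N s))
    (τ : ℝ → ℝ) (hτ : ∀ s, τ s = ⟪deriv N s, B s⟫)
    (f : ℝ → ℝ) (hf : ∀ s, f s = Real.sqrt (κ s ^ 2 + τ s ^ 2))
    (g : ℝ → ℝ) (hg : ∀ s, g s = κ s ^ 2 / (κ s ^ 2 + τ s ^ 2) * deriv (fun u => τ u / κ u) s)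
    (C : ℝ → EuclideanSpace ℝ (Fin 3))
    (hC : ∀ s, C s = (Real.sqrt (κ s ^ 2 + τ s ^ 2))⁻¹ • ((-κ s) • T s + τ s • B s))
    (W : ℝ → EuclideanSpace ℝ (Fin 3))
    (hW : ∀ s, W s = (Real.sqrt (κ s ^ 2 + τ s ^ 2))⁻¹ • (τ s • T s + κ s • B s)) :
    ∀ s : ℝ,
      ⟪T s, deriv C s⟫ = g s * τ s / f s ∧
      ‖deriv C s‖ ^ 2 = f s ^ 2 + g s ^ 2 ∧
      α s - (⟪T s, deriv C s⟫ / ‖deriv C s‖ ^ 2) • C s =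
        α s - (g s * τ s / (f s * (f s ^ 2 + g s ^ 2))) • C s := by
  obtain rfl := funext hT
  obtain rfl := funext hκ
  obtain rfl := funext hN
  obtain rfl := funext hB
  obtain rfl := funext hτ
  obtain rfl := funext hf
  obtain rfl := funext hg
  obtain rfl := funext hC
  exact stmt_5_general (contDiff_infty.1 hα 4) hunit hκpos
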